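/- Let n and n_h be unit vectors in ℝ^d with ‖n − n_h‖ ≤ ε for some ε < 1, let P = I − n ⊗ n and P_h = I − n_h ⊗ n_h, let H be a symmetric linear map on ℝ^d, and let ρ ∈ ℝ satisfy |ρ| ‖H‖ < √(1 − ε²). Define B = P (I − ρ H) P_h. Then for every v ∈ ℝ^d with ⟨n_h, v⟩ = 0 one has ‖B v‖ ≥ (√(1 − ε²) − |ρ| ‖H‖) ‖v‖, and the restriction of B to the hyperplane {v : ⟨n_h, v⟩ = 0} is a linear bijection onto the hyperplane {w : ⟨n, w⟩ = 0}. -/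

import Mathlib

/-!
For `v ⊥ n_h` the component of `v` along `n` is `⟨n - n_h, v⟩`, hence at most `ε ‖v‖`, so Pythagoras
gives `‖P v‖ ≥ √(1 - ε²) ‖v‖`. Since `P` is a contraction, the perturbation `ρ P H v` costs at most
`|ρ| ‖H‖ ‖v‖`, which yields the lower bound. The bound makes `B` injective on the hyperplane
orthogonal to `n_h`; this hyperplane and the one orthogonal to `n` have the same finite dimension,
so `B` is also surjective between them.
-/

open scoped RealInnerProductSpace

/-- The rank-one map `a ⊗ b : v ↦ ⟨b, v⟩ a`. -/
noncomputable def outerProd {d : ℕ} (a b : EuclideanSpace ℝ (Fin d)) :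
    EuclideanSpace ℝ (Fin d) →L[ℝ] EuclideanSpace ℝ (Fin d) :=
  (innerSL ℝ b).smulRight a

/-- The orthogonal projection `I - n ⊗ n` onto the orthogonal complement of `n`. -/
noncomputable def tangProj {d : ℕ} (n : EuclideanSpace ℝ (Fin d)) :
    EuclideanSpace ℝ (Fin d) →L[ℝ] EuclideanSpace ℝ (Fin d) :=
  ContinuousLinearMap.id ℝ _ - outerProd n n

/-- The map `B = P (I - ρ H) P_h` between the discrete and exact tangent spaces. -/
noncomputable def Bmap {d : ℕ} (n nh : EuclideanSpace ℝ (Fin d))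
    (H : EuclideanSpace ℝ (Fin d) →L[ℝ] EuclideanSpace ℝ (Fin d)) (ρ : ℝ) :
    EuclideanSpace ℝ (Fin d) →L[ℝ] EuclideanSpace ℝ (Fin d) :=
  tangProj n ∘L (ContinuousLinearMap.id ℝ _ - ρ • H) ∘L tangProj nh

lemma tangProj_apply {d : ℕ} (n v : EuclideanSpace ℝ (Fin d)) :
    tangProj n v = v - ⟪n, v⟫ • n := by
  simp [tangProj, outerProd]

lemma inner_tangProj {d : ℕ} (n v : EuclideanSpace ℝ (Fin d)) (hn : ‖n‖ = 1) :
    ⟪n, tangProj n v⟫ = 0 := by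
  rw [tangProj_apply, inner_sub_right, inner_smul_right, real_inner_self_eq_norm_sq, hn]
  ring

lemma norm_tangProj_sq {d : ℕ} (n v : EuclideanSpace ℝ (Fin d)) (hn : ‖n‖ = 1) :
    ‖tangProj n v‖ ^ 2 = ‖v‖ ^ 2 - ⟪n, v⟫ ^ 2 := by
  rw [tangProj_apply, norm_sub_sq_real, inner_smul_right, norm_smul, hn, real_inner_comm,
    mul_one, Real.norm_eq_abs, sq_abs]
  ring

lemma norm_tangProj_le {d : ℕ} (n v : EuclideanSpace ℝ (Fin d)) (hn : ‖n‖ = 1) :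
    ‖tangProj n v‖ ≤ ‖v‖ := by
  have h := norm_tangProj_sq n v hn
  exact le_of_sq_le_sq (by nlinarith [sq_nonneg ⟪n, v⟫]) (norm_nonneg v)

lemma Bmap_apply_of_inner_eq_zero {d : ℕ} (n nh : EuclideanSpace ℝ (Fin d))
    (H : EuclideanSpace ℝ (Fin d) →L[ℝ] EuclideanSpace ℝ (Fin d)) (ρ : ℝ)
    (v : EuclideanSpace ℝ (Fin d)) (hv : ⟪nh, v⟫ = 0) :
    Bmap n nh H ρ v = tangProj n v - ρ • tangProj n (H v) := by
  have h : tangProj nh v = v := by simp [tangProj_apply, hv]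
  simp [Bmap, h]

/-- The hyperplanes orthogonal to `n` and to `n_h` are nearly parallel, so projecting from one to
the other keeps at least the fraction `√(1 - ε²)` of the length. -/
lemma sqrt_mul_norm_le_norm_tangProj {d : ℕ} (n nh : EuclideanSpace ℝ (Fin d)) (hn : ‖n‖ = 1)
    (ε : ℝ) (hε : ε < 1) (hdist : ‖n - nh‖ ≤ ε)
    (v : EuclideanSpace ℝ (Fin d)) (hv : ⟪nh, v⟫ = 0) :
    Real.sqrt (1 - ε ^ 2) * ‖v‖ ≤ ‖tangProj n v‖ := by
  have hε0 : 0 ≤ ε := (norm_nonneg _).trans hdist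
  have h1 : |⟪n, v⟫| ≤ ε * ‖v‖ := by
    have h2 : ⟪n, v⟫ = ⟪n - nh, v⟫ := by rw [inner_sub_left, hv, sub_zero]
    rw [h2]
    exact (abs_real_inner_le_norm _ _).trans (by gcongr)
  have h3 : ⟪n, v⟫ ^ 2 ≤ (ε * ‖v‖) ^ 2 := sq_le_sq.mpr (h1.trans (le_abs_self _))
  refine le_of_sq_le_sq ?_ (norm_nonneg _)
  rw [norm_tangProj_sq n v hn, mul_pow, Real.sq_sqrt (by nlinarith)]
  nlinarith

lemma finrank_orthogonal_span_unit {d : ℕ} (n : EuclideanSpace ℝ (Fin d)) (hn : ‖n‖ = 1) :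
    1 + Module.finrank ℝ (ℝ ∙ n)ᗮ = d := by
  have h := (ℝ ∙ n).finrank_add_finrank_orthogonal
  have hn0 : n ≠ 0 := by
    rintro rfl
    simp at hn
  rwa [finrank_span_singleton hn0, finrank_euclideanSpace_fin] at h

/-- For unit vectors `n`, `n_h` with `‖n - n_h‖ ≤ ε < 1`, a symmetric `H`, and `ρ` with
`|ρ|‖H‖ < √(1 - ε²)`, the map `B = P (I - ρ H) P_h` satisfies
`‖B v‖ ≥ (√(1 - ε²) - |ρ|‖H‖)‖v‖` for all `v ⊥ n_h`, and restricts to a bijection from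
the hyperplane orthogonal to `n_h` onto the hyperplane orthogonal to `n`. -/
theorem Bmap_lower_bound_and_bijective {d : ℕ} (n nh : EuclideanSpace ℝ (Fin d))
    (hn : ‖n‖ = 1) (hnh : ‖nh‖ = 1)
    (ε : ℝ) (hε : ε < 1) (hdist : ‖n - nh‖ ≤ ε)
    (H : EuclideanSpace ℝ (Fin d) →L[ℝ] EuclideanSpace ℝ (Fin d))
    (hH : ∀ u v : EuclideanSpace ℝ (Fin d), ⟪H u, v⟫ = ⟪u, H v⟫)
    (ρ : ℝ) (hρ : |ρ| * ‖H‖ < Real.sqrt (1 - ε ^ 2)) :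
    (∀ v : EuclideanSpace ℝ (Fin d), ⟪nh, v⟫ = 0 →
      (Real.sqrt (1 - ε ^ 2) - |ρ| * ‖H‖) * ‖v‖ ≤ ‖Bmap n nh H ρ v‖) ∧
    Set.BijOn (fun v => Bmap n nh H ρ v)
      {v : EuclideanSpace ℝ (Fin d) | ⟪nh, v⟫ = 0}
      {w : EuclideanSpace ℝ (Fin d) | ⟪n, w⟫ = 0} := by
  have lower : ∀ v : EuclideanSpace ℝ (Fin d), ⟪nh, v⟫ = 0 →
      (Real.sqrt (1 - ε ^ 2) - |ρ| * ‖H‖) * ‖v‖ ≤ ‖Bmap n nh H ρ v‖ := by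
    intro v hv
    rw [Bmap_apply_of_inner_eq_zero n nh H ρ v hv]
    have h1 := sqrt_mul_norm_le_norm_tangProj n nh hn ε hε hdist v hv
    have h2 : ‖ρ • tangProj n (H v)‖ ≤ |ρ| * (‖H‖ * ‖v‖) := by
      rw [norm_smul, Real.norm_eq_abs]
      gcongr
      exact (norm_tangProj_le n _ hn).trans (H.le_opNorm v)
    have h3 := norm_sub_norm_le (tangProj n v) (ρ • tangProj n (H v))
    linarith
  have maps : ∀ v, ⟪n, Bmap n nh H ρ v⟫ = 0 := fun v => inner_tangProj n _ hn
  have ker : ∀ v : EuclideanSpace ℝ (Fin d), ⟪nh, v⟫ = 0 → Bmap n nh H ρ v = 0 → v = 0 := by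
    intro v hv h0
    have h := lower v hv
    rw [h0, norm_zero] at h
    exact norm_le_zero_iff.mp (nonpos_of_mul_nonpos_right h (sub_pos.mpr hρ))
  refine ⟨lower, fun v _ => maps v, ?_, ?_⟩
  · intro u hu v hv huv
    refine sub_eq_zero.mp (ker (u - v) ?_ ?_)
    · rw [inner_sub_right, hu, hv, sub_zero]
    · rw [map_sub]
      exact sub_eq_zero.mpr huv
  · intro w hw
    -- `B` as a linear map between the two hyperplanes, where dimensions can be compared.
    let T : (ℝ ∙ nh)ᗮ →ₗ[ℝ] (ℝ ∙ n)ᗮ :=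
      (Bmap n nh H ρ).toLinearMap.restrict fun v _ =>
        Submodule.mem_orthogonal_singleton_iff_inner_right.mpr (maps v)
    have hT : Function.Injective T := by
      rw [injective_iff_map_eq_zero]
      intro v hv
      exact Subtype.ext (ker v (Submodule.mem_orthogonal_singleton_iff_inner_right.mp v.2)
        (congrArg Subtype.val hv))
    have hdim : Module.finrank ℝ (ℝ ∙ nh)ᗮ = Module.finrank ℝ (ℝ ∙ n)ᗮ := by
      have h1 := finrank_orthogonal_span_unit n hn
      have h2 := finrank_orthogonal_span_unit nh hnh
      omega
    obtain ⟨v, hv⟩ := (LinearMap.injective_iff_surjective_of_finrank_eq_finrank hdim).mp hT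
      ⟨w, Submodule.mem_orthogonal_singleton_iff_inner_right.mpr hw⟩
    exact ⟨v, Submodule.mem_orthogonal_singleton_iff_inner_right.mp v.2, congrArg Subtype.val hv⟩
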